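/- arXiv:2502.17421 — 2 statements merged into one kernel-verified Lean document; each statement's English description precedes it below -/
import Mathlib

section
/- Let d, N₁, N₂ be positive integers, q ∈ ℝ^d a query vector, K₁ ∈ ℝ^{N₁×d}, K₂ ∈ ℝ^{N₂×d} key matrices, and V₁ ∈ ℝ^{N₁×d}, V₂ ∈ ℝ^{N₂×d} value matrices. Write softmax(qᵀ[K₁;K₂]ᵀ) = [s₁ᵀ, s₂ᵀ] with s₁ ∈ ℝ^{N₁}, s₂ ∈ ℝ^{N₂}, and write softmax(qᵀK₁ᵀ) = s̃₁ᵀ with s̃₁ ∈ ℝ^{N₁}. Then ‖softmax(qᵀK₁ᵀ)V₁ − softmax(qᵀ[K₁;K₂]ᵀ)[V₁ᵀ, V₂ᵀ]ᵀ‖₂ = ‖s̃₁ᵀV₁ − s₁ᵀV₁ − s₂ᵀV₂‖₂ ≤ 2‖s₂‖₁ · max{‖V₁‖_{2,∞}, ‖V₂‖_{2,∞}}. -/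
open scoped BigOperators

/-- Euclidean (ℓ₂) norm of a finite real vector. -/
noncomputable def l2norm {n : ℕ} (v : Fin n → ℝ) : ℝ :=
  Real.sqrt (∑ i, v i ^ 2)

theorem l2norm_eq_norm {n : ℕ} (v : Fin n → ℝ) : l2norm v = ‖WithLp.toLp 2 v‖ := by
  simp [l2norm, EuclideanSpace.norm_eq]

theorem l2norm_sub_le {n : ℕ} (v w : Fin n → ℝ) :
    l2norm (fun i => v i - w i) ≤ l2norm v + l2norm w := by
  simp only [l2norm_eq_norm]
  exact norm_sub_le (WithLp.toLp 2 v) (WithLp.toLp 2 w)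

theorem l2norm_comb_le {n N : ℕ} (w : Fin N → ℝ) (V : Matrix (Fin N) (Fin n) ℝ) (M : ℝ)
    (hM : ∀ j, l2norm (V j) ≤ M) :
    l2norm (fun i => ∑ j, w j * V j i) ≤ (∑ j, |w j|) * M := by
  have h : WithLp.toLp 2 (fun i => ∑ j, w j * V j i) = ∑ j, w j • WithLp.toLp 2 (V j) := by
    ext i
    simp
  rw [l2norm_eq_norm, h, Finset.sum_mul]
  refine (norm_sum_le _ _).trans (Finset.sum_le_sum fun j _ => ?_)
  rw [norm_smul, Real.norm_eq_abs, ← l2norm_eq_norm]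
  exact mul_le_mul_of_nonneg_left (hM j) (abs_nonneg _)

/-- **Attention sink lemma.** Dropping the second block of keys/values changes the
attention output by at most `2‖s₂‖₁ · max{‖V₁‖_{2,∞}, ‖V₂‖_{2,∞}}`. -/
theorem attention_sink
    (d N₁ N₂ : ℕ) (hd : 0 < d) (hN₁ : 0 < N₁) (hN₂ : 0 < N₂)
    (q : Fin d → ℝ)
    (K₁ : Matrix (Fin N₁) (Fin d) ℝ) (K₂ : Matrix (Fin N₂) (Fin d) ℝ)
    (V₁ : Matrix (Fin N₁) (Fin d) ℝ) (V₂ : Matrix (Fin N₂) (Fin d) ℝ)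
    -- `[s₁ᵀ, s₂ᵀ] = softmax(qᵀ[K₁;K₂]ᵀ)`
    (s₁ : Fin N₁ → ℝ)
    (hs₁ : s₁ = fun j => Real.exp (∑ a, q a * K₁ j a) /
      ((∑ l, Real.exp (∑ a, q a * K₁ l a)) + (∑ l, Real.exp (∑ a, q a * K₂ l a))))
    (s₂ : Fin N₂ → ℝ)
    (hs₂ : s₂ = fun j => Real.exp (∑ a, q a * K₂ j a) /
      ((∑ l, Real.exp (∑ a, q a * K₁ l a)) + (∑ l, Real.exp (∑ a, q a * K₂ l a))))
    -- `s₁tildeᵀ = softmax(qᵀK₁ᵀ)`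
    (s₁tilde : Fin N₁ → ℝ)
    (hs₁tilde : s₁tilde = fun j => Real.exp (∑ a, q a * K₁ j a) /
      (∑ l, Real.exp (∑ a, q a * K₁ l a))) :
    l2norm (fun i => (∑ j, s₁tilde j * V₁ j i) -
        ((∑ j, s₁ j * V₁ j i) + (∑ j, s₂ j * V₂ j i)))
      ≤ 2 * (∑ j, |s₂ j|) * max (⨆ j, l2norm (V₁ j)) (⨆ j, l2norm (V₂ j)) := by
  set M := max (⨆ j, l2norm (V₁ j)) (⨆ j, l2norm (V₂ j)) with hMdef
  have h1 : ∀ j, l2norm (V₁ j) ≤ M := fun j =>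
    (le_ciSup (f := fun j => l2norm (V₁ j)) (Set.finite_range _).bddAbove j).trans (le_max_left _ _)
  have h2 : ∀ j, l2norm (V₂ j) ≤ M := fun j =>
    (le_ciSup (f := fun j => l2norm (V₂ j)) (Set.finite_range _).bddAbove j).trans (le_max_right _ _)
  have hsum : ∑ j, |s₁tilde j - s₁ j| = ∑ j, |s₂ j| := by
    haveI : Nonempty (Fin N₁) := ⟨⟨0, hN₁⟩⟩
    have hA : 0 < ∑ l, Real.exp (∑ a, q a * K₁ l a) :=
      Finset.sum_pos (fun _ _ => Real.exp_pos _) Finset.univ_nonempty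
    have hB : 0 ≤ ∑ l, Real.exp (∑ a, q a * K₂ l a) :=
      Finset.sum_nonneg (fun _ _ => (Real.exp_pos _).le)
    have e1 : ∀ j, |s₁tilde j - s₁ j| = s₁tilde j - s₁ j := by
      intro j
      apply abs_of_nonneg
      rw [hs₁, hs₁tilde, sub_nonneg]
      exact div_le_div_of_nonneg_left (Real.exp_pos _).le hA (by linarith)
    have e2 : ∀ j, |s₂ j| = s₂ j := by
      intro j
      apply abs_of_nonneg
      rw [hs₂]
      exact div_nonneg (Real.exp_pos _).le (by linarith)
    simp only [e1, e2, Finset.sum_sub_distrib]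
    rw [hs₁, hs₂, hs₁tilde]
    simp only [← Finset.sum_div]
    generalize (∑ l, Real.exp (∑ a, q a * K₁ l a)) = A at *
    generalize (∑ l, Real.exp (∑ a, q a * K₂ l a)) = B at *
    have : A + B ≠ 0 := by linarith
    field_simp
    ring
  have heq : (fun i => (∑ j, s₁tilde j * V₁ j i) -
        ((∑ j, s₁ j * V₁ j i) + (∑ j, s₂ j * V₂ j i))) =
      fun i => (∑ j, (s₁tilde j - s₁ j) * V₁ j i) - ∑ j, s₂ j * V₂ j i := by
    funext i
    simp only [sub_mul, Finset.sum_sub_distrib]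
    ring
  rw [heq]
  have t := l2norm_sub_le (fun i => ∑ j, (s₁tilde j - s₁ j) * V₁ j i)
    (fun i => ∑ j, s₂ j * V₂ j i)
  have b1 := l2norm_comb_le (fun j => s₁tilde j - s₁ j) V₁ M h1
  have b2 := l2norm_comb_le s₂ V₂ M h2
  simp only [hsum] at b1
  linarith
end

section
/- Let N, d, H be positive integers. Define LN : ℝ^d → ℝ^d by LN(x) = x if ‖x‖₂ ≤ 1 and LN(x) = x/‖x‖₂ otherwise, applied row-wise to matrices. For X ∈ ℝ^{N×d} and weight matrices W_{Q,h} ∈ ℝ^{d×d_h}, W_{K,h} ∈ ℝ^{d×d_h}, W_{V,h} ∈ ℝ^{d×d} for h = 1,…,H, define the multi-head self-attention mha(X, {W_{Q,h}, W_{K,h}, W_{V,h}}_{h=1}^{H}) = ∑_{h=1}^{H} softmax(LN(X) W_{Q,h} (LN(X) W_{K,h})ᵀ) X W_{V,h} ∈ ℝ^{N×d}, where softmax is applied row-wise. Suppose X, X̃ ∈ ℝ^{N×d} satisfy ‖X‖_{2,∞} ≤ B_X and ‖X̃‖_{2,∞} ≤ B_X, and ‖W_{Q,h}‖_F ≤ B_Q,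 ‖W_{K,h}‖_F ≤ B_K, ‖W_{V,h}‖_F ≤ B_V for all h ∈ [H]. Then ‖mha(X, {W_{Q,h}, W_{K,h}, W_{V,h}}_{h=1}^{H}) − mha(X̃, {W_{Q,h}, W_{K,h}, W_{V,h}}_{h=1}^{H})‖_{2,∞} ≤ H·B_V·(1 + 4·B_X²·B_Q·B_K)·‖X − X̃‖_{2,∞}. -/
open scoped BigOperators Matrix

/-- Frobenius norm of a real matrix. -/
noncomputable def frobNorm {m n : ℕ} (A : Matrix (Fin m) (Fin n) ℝ) : ℝ :=
  Real.sqrt (∑ i, ∑ j, A i j ^ 2)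

/-- ℓ_{2,∞} norm of a matrix: the maximum Euclidean norm of a row. -/
noncomputable def norm2inf {m n : ℕ} (A : Matrix (Fin m) (Fin n) ℝ) : ℝ :=
  ⨆ i, l2norm (A i)

/-- Row-wise normalization: projection onto the closed Euclidean unit ball. -/
noncomputable def LN {n : ℕ} (x : Fin n → ℝ) : Fin n → ℝ :=
  if l2norm x ≤ 1 then x else (l2norm x)⁻¹ • x

/-- Multi-head self-attention
`mha(X, {W_{Q,h},W_{K,h},W_{V,h}}) = ∑_h softmax(LN(X)W_{Q,h} (LN(X)W_{K,h})ᵀ) X W_{V,h}`,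
with `softmax` applied row-wise and `LN` applied row-wise to `X`. -/
noncomputable def mha {N d dh H : ℕ}
    (X : Matrix (Fin N) (Fin d) ℝ)
    (WQ WK : Fin H → Matrix (Fin d) (Fin dh) ℝ)
    (WV : Fin H → Matrix (Fin d) (Fin d) ℝ) :
    Matrix (Fin N) (Fin d) ℝ :=
  ∑ h, Matrix.of fun i k =>
    ∑ j, (Real.exp (Matrix.vecMul (LN (X i)) (WQ h) ⬝ᵥ Matrix.vecMul (LN (X j)) (WK h)) /
          ∑ l, Real.exp (Matrix.vecMul (LN (X i)) (WQ h) ⬝ᵥ Matrix.vecMul (LN (X l)) (WK h))) *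
      Matrix.vecMul (X j) (WV h) k


lemma l2norm_eq {n : ℕ} (v : Fin n → ℝ) : l2norm v = ‖(WithLp.toLp 2 v : EuclideanSpace ℝ (Fin n))‖ := by
  simp [l2norm, EuclideanSpace.norm_eq]

lemma l2norm_nonneg {n : ℕ} (v : Fin n → ℝ) : 0 ≤ l2norm v := Real.sqrt_nonneg _

lemma l2norm_add_le {n : ℕ} (v w : Fin n → ℝ) : l2norm (v + w) ≤ l2norm v + l2norm w := by
  simp only [l2norm_eq, WithLp.toLp_add]; exact norm_add_le _ _

lemma l2norm_smul {n : ℕ} (c : ℝ) (v : Fin n → ℝ) : l2norm (c • v) = |c| * l2norm v := by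
  simp only [l2norm_eq, WithLp.toLp_smul, norm_smul, Real.norm_eq_abs]

lemma l2norm_sum_le {n m : ℕ} (f : Fin m → Fin n → ℝ) :
    l2norm (∑ i, f i) ≤ ∑ i, l2norm (f i) := by
  simp only [l2norm_eq, WithLp.toLp_sum]; exact norm_sum_le _ _

lemma l2norm_sq {n : ℕ} (v : Fin n → ℝ) : l2norm v ^ 2 = v ⬝ᵥ v := by
  rw [l2norm, Real.sq_sqrt (Finset.sum_nonneg fun i _ => sq_nonneg _)]
  simp [dotProduct, sq]

lemma abs_dot_le {n : ℕ} (v w : Fin n → ℝ) : |v ⬝ᵥ w| ≤ l2norm v * l2norm w := by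
  have h : (v ⬝ᵥ w) ^ 2 ≤ (l2norm v * l2norm w) ^ 2 := by
    rw [mul_pow, l2norm, l2norm, Real.sq_sqrt (Finset.sum_nonneg fun i _ => sq_nonneg _),
      Real.sq_sqrt (Finset.sum_nonneg fun i _ => sq_nonneg _)]
    exact Finset.sum_mul_sq_le_sq_mul_sq _ _ _
  exact abs_le_of_sq_le_sq h (mul_nonneg (l2norm_nonneg _) (l2norm_nonneg _))

lemma l2norm_vecMul_le {m n : ℕ} (v : Fin m → ℝ) (A : Matrix (Fin m) (Fin n) ℝ) :
    l2norm (Matrix.vecMul v A) ≤ l2norm v * frobNorm A := by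
  rw [l2norm, l2norm, frobNorm, ← Real.sqrt_mul (Finset.sum_nonneg fun i _ => sq_nonneg _)]
  apply Real.sqrt_le_sqrt
  rw [Finset.sum_comm (f := fun i j => A i j ^ 2), Finset.mul_sum]
  exact Finset.sum_le_sum fun j _ => Finset.sum_mul_sq_le_sq_mul_sq Finset.univ v (fun i => A i j)

lemma LN_spec {n : ℕ} (x : Fin n → ℝ) :
    l2norm (LN x) ≤ 1 ∧ l2norm (LN x) ≤ l2norm x ∧
    ∃ c : ℝ, 0 ≤ c ∧ x = LN x + c • LN x ∧ (c = 0 ∨ l2norm (LN x) = 1) := by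
  unfold LN
  split_ifs with h
  · exact ⟨h, le_rfl, 0, le_rfl, by simp, Or.inl rfl⟩
  · push Not at h
    have hp : 0 < l2norm x := by linarith
    have h1 : l2norm ((l2norm x)⁻¹ • x) = 1 := by
      rw [l2norm_smul, abs_of_pos (inv_pos.2 hp), inv_mul_cancel₀ hp.ne']
    refine ⟨h1.le, by rw [h1]; exact h.le, l2norm x - 1, by linarith, ?_, Or.inr h1⟩
    rw [smul_smul, ← add_smul, sub_mul, mul_inv_cancel₀ hp.ne']
    simp

lemma LN_proj {n : ℕ} (x z : Fin n → ℝ) (hz : l2norm z ≤ 1) :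
    0 ≤ (x - LN x) ⬝ᵥ (LN x - z) := by
  obtain ⟨h1, -, c, hc, hx, h⟩ := LN_spec x
  have e : x - LN x = c • LN x := by
    conv_lhs => rw [hx]
    have : LN (LN x + c • LN x) = LN x := by rw [← hx]
    rw [this]; simp
  rw [e, smul_dotProduct, dotProduct_sub, ← l2norm_sq]
  rcases h with h | h
  · simp [h]
  · have := (abs_le.1 (abs_dot_le (LN x) z)).2
    rw [h] at this ⊢
    simp only [smul_eq_mul]
    apply mul_nonneg hc
    linarith

lemma LN_lip {n : ℕ} (x y : Fin n → ℝ) : l2norm (LN x - LN y) ≤ l2norm (x - y) := by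
  have h1 := LN_proj x (LN y) (LN_spec y).1
  have h2 := LN_proj y (LN x) (LN_spec x).1
  have h3 : (LN x - LN y) ⬝ᵥ (LN x - LN y) ≤ (x - y) ⬝ᵥ (LN x - LN y) := by
    simp only [sub_dotProduct, dotProduct_sub] at h1 h2 ⊢
    linarith
  rw [← l2norm_sq] at h3
  have h4 := (abs_le.1 (abs_dot_le (x - y) (LN x - LN y))).2
  by_contra! h
  nlinarith [l2norm_nonneg (x - y), l2norm_nonneg (LN x - LN y)]

lemma sub_le_log {u v : ℝ} (hv : 0 < v) (h : v ≤ u) :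
    u - v ≤ (Real.log u - Real.log v) * ((u + v) / 2) := by
  have hu : 0 < u := by linarith
  have := Real.le_log_one_add_of_nonneg (x := u / v - 1) (by
    rw [sub_nonneg, le_div_iff₀ hv]; linarith)
  rw [add_sub_cancel, Real.log_div hu.ne' hv.ne'] at this
  have e : 2 * (u / v - 1) / (u / v - 1 + 2) = (u - v) / ((u + v) / 2) := by
    have : u / v - 1 + 2 = (u + v) / v := by field_simp; ring
    rw [this]; field_simp
  rw [e, div_le_iff₀ (by positivity)] at this
  exact this

lemma abs_sub_le_log {u v : ℝ} (hu : 0 < u) (hv : 0 < v) :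
    |u - v| ≤ |Real.log u - Real.log v| * ((u + v) / 2) := by
  rcases le_total v u with h | h
  · rw [abs_of_nonneg (by linarith)]
    exact (sub_le_log hv h).trans (by gcongr; exact le_abs_self _)
  · rw [abs_sub_comm, abs_sub_comm (Real.log u), abs_of_nonneg (by linarith), add_comm u]
    exact (sub_le_log hu h).trans (by gcongr; exact le_abs_self _)

lemma lse_le {N : ℕ} (hN : 0 < N) (a b : Fin N → ℝ) (ε : ℝ) (h : ∀ j, |a j - b j| ≤ ε) :
    Real.log (∑ l, Real.exp (a l)) ≤ ε + Real.log (∑ l, Real.exp (b l)) := by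
  haveI : Nonempty (Fin N) := ⟨⟨0, hN⟩⟩
  have pa : 0 < ∑ l, Real.exp (a l) := Finset.sum_pos (fun i _ => Real.exp_pos _) Finset.univ_nonempty
  have pb : 0 < ∑ l, Real.exp (b l) := Finset.sum_pos (fun i _ => Real.exp_pos _) Finset.univ_nonempty
  rw [← Real.log_exp ε, ← Real.log_mul (Real.exp_pos _).ne' pb.ne']
  apply Real.log_le_log pa
  rw [Finset.mul_sum]
  refine Finset.sum_le_sum fun j _ => ?_
  rw [← Real.exp_add]
  apply Real.exp_le_exp.2
  linarith [(abs_le.1 (h j)).2]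

lemma softmax_lip {N : ℕ} (hN : 0 < N) (a b : Fin N → ℝ) (ε : ℝ) (h : ∀ j, |a j - b j| ≤ ε) :
    ∑ j, |Real.exp (a j) / (∑ l, Real.exp (a l)) - Real.exp (b j) / (∑ l, Real.exp (b l))|
      ≤ 2 * ε := by
  haveI : Nonempty (Fin N) := ⟨⟨0, hN⟩⟩
  have pa : 0 < ∑ l, Real.exp (a l) := Finset.sum_pos (fun i _ => Real.exp_pos _) Finset.univ_nonempty
  have pb : 0 < ∑ l, Real.exp (b l) := Finset.sum_pos (fun i _ => Real.exp_pos _) Finset.univ_nonempty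
  have h1 := lse_le hN a b ε h
  have h2 := lse_le hN b a ε (fun j => by rw [abs_sub_comm]; exact h j)
  have sa : ∑ j, Real.exp (a j) / (∑ l, Real.exp (a l)) = 1 := by
    rw [← Finset.sum_div, div_self pa.ne']
  have sb : ∑ j, Real.exp (b j) / (∑ l, Real.exp (b l)) = 1 := by
    rw [← Finset.sum_div, div_self pb.ne']
  calc _ ≤ ∑ j, (2 * ε) * ((Real.exp (a j) / (∑ l, Real.exp (a l)) +
        Real.exp (b j) / (∑ l, Real.exp (b l))) / 2) := by
        refine Finset.sum_le_sum fun j _ => ?_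
        have ha := div_pos (Real.exp_pos (a j)) pa
        have hb := div_pos (Real.exp_pos (b j)) pb
        refine (abs_sub_le_log ha hb).trans ?_
        gcongr
        rw [Real.log_div (Real.exp_pos _).ne' pa.ne', Real.log_div (Real.exp_pos _).ne' pb.ne',
          Real.log_exp, Real.log_exp, abs_le]
        have := abs_le.1 (h j)
        constructor <;> linarith
    _ = _ := by
        rw [← Finset.mul_sum, ← Finset.sum_div, Finset.sum_add_distrib, sa, sb]; ring

lemma row_le {m n : ℕ} (A : Matrix (Fin m) (Fin n) ℝ) (i : Fin m) : l2norm (A i) ≤ norm2inf A :=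
  le_ciSup (f := fun i => l2norm (A i)) (Set.finite_range _).bddAbove i

lemma logit_lip {d dh : ℕ} (x y x' y' : Fin d → ℝ) (Q K : Matrix (Fin d) (Fin dh) ℝ)
    (BX BQ BK D : ℝ) (hBX : 0 ≤ BX) (hQ : frobNorm Q ≤ BQ) (hK : frobNorm K ≤ BK)
    (hx' : l2norm x' ≤ BX) (hy : l2norm y ≤ BX)
    (hx : l2norm (x - y) ≤ D) (hxy : l2norm (x' - y') ≤ D) :
    |Matrix.vecMul (LN x) Q ⬝ᵥ Matrix.vecMul (LN x') K -
      Matrix.vecMul (LN y) Q ⬝ᵥ Matrix.vecMul (LN y') K| ≤ 2 * BX * BQ * BK * D := by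
  have key : ∀ (u v : Fin d → ℝ) (s t : ℝ), l2norm u ≤ s → l2norm v ≤ t →
      |Matrix.vecMul u Q ⬝ᵥ Matrix.vecMul v K| ≤ (s * BQ) * (t * BK) := by
    intro u v s t hu hv
    have hs : 0 ≤ s := (l2norm_nonneg _).trans hu
    have ht : 0 ≤ t := (l2norm_nonneg _).trans hv
    have q0 : 0 ≤ frobNorm Q := Real.sqrt_nonneg _
    have k0 : 0 ≤ frobNorm K := Real.sqrt_nonneg _
    have hBQ : 0 ≤ BQ := q0.trans hQ
    refine (abs_dot_le _ _).trans ?_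
    apply mul_le_mul _ _ (l2norm_nonneg _) (mul_nonneg hs hBQ)
    · exact (l2norm_vecMul_le _ _).trans (mul_le_mul hu hQ q0 hs)
    · exact (l2norm_vecMul_le _ _).trans (mul_le_mul hv hK k0 ht)
  have e : Matrix.vecMul (LN x) Q ⬝ᵥ Matrix.vecMul (LN x') K -
      Matrix.vecMul (LN y) Q ⬝ᵥ Matrix.vecMul (LN y') K =
      Matrix.vecMul (LN x - LN y) Q ⬝ᵥ Matrix.vecMul (LN x') K +
      Matrix.vecMul (LN y) Q ⬝ᵥ Matrix.vecMul (LN x' - LN y') K := by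
    simp only [Matrix.sub_vecMul, sub_dotProduct, dotProduct_sub]; ring
  rw [e]
  refine (abs_add_le _ _).trans ?_
  have h1 := key (LN x - LN y) (LN x') D BX ((LN_lip _ _).trans hx) ((LN_spec _).2.1.trans hx')
  have h2 := key (LN y) (LN x' - LN y') BX D ((LN_spec _).2.1.trans hy) ((LN_lip _ _).trans hxy)
  linarith

lemma avg_lip {N d : ℕ} (p q : Fin N → ℝ) (x y : Fin N → Fin d → ℝ) (D BX ε : ℝ)
    (hp : ∀ j, 0 ≤ p j) (hs : ∑ j, p j = 1) (hpq : ∑ j, |p j - q j| ≤ ε) (hBX : 0 ≤ BX)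
    (hxy : ∀ j, l2norm (x j - y j) ≤ D) (hy : ∀ j, l2norm (y j) ≤ BX) :
    l2norm (∑ j, (p j • x j - q j • y j)) ≤ D + ε * BX := by
  calc _ ≤ ∑ j, l2norm (p j • x j - q j • y j) := l2norm_sum_le _
    _ ≤ ∑ j, (p j * D + |p j - q j| * BX) := by
        refine Finset.sum_le_sum fun j _ => ?_
        have e : p j • x j - q j • y j = p j • (x j - y j) + (p j - q j) • y j := by
          rw [smul_sub, sub_smul]; abel
        rw [e]
        refine (l2norm_add_le _ _).trans ?_
        rw [l2norm_smul, l2norm_smul, abs_of_nonneg (hp j)]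
        exact add_le_add (mul_le_mul_of_nonneg_left (hxy j) (hp j))
          (mul_le_mul_of_nonneg_left (hy j) (abs_nonneg _))
    _ = D + (∑ j, |p j - q j|) * BX := by
        rw [Finset.sum_add_distrib, ← Finset.sum_mul, ← Finset.sum_mul, hs, one_mul]
    _ ≤ _ := by gcongr

/-- **Lipschitz property of multi-head self-attention in its input**
(Lemma I.8 of Zhang et al.). -/
theorem mha_lipschitz
    (N d dh H : ℕ) (hN : 0 < N) (hd : 0 < d) (hdh : 0 < dh) (hH : 0 < H)
    (X Xt : Matrix (Fin N) (Fin d) ℝ)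
    (WQ WK : Fin H → Matrix (Fin d) (Fin dh) ℝ)
    (WV : Fin H → Matrix (Fin d) (Fin d) ℝ)
    (BX BQ BK BV : ℝ)
    (hX : norm2inf X ≤ BX) (hXt : norm2inf Xt ≤ BX)
    (hWQ : ∀ h, frobNorm (WQ h) ≤ BQ)
    (hWK : ∀ h, frobNorm (WK h) ≤ BK)
    (hWV : ∀ h, frobNorm (WV h) ≤ BV) :
    norm2inf (mha X WQ WK WV - mha Xt WQ WK WV) ≤
      H * BV * (1 + 4 * BX ^ 2 * BQ * BK) * norm2inf (X - Xt) := by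
  haveI : Nonempty (Fin N) := ⟨⟨0, hN⟩⟩
  have hBX : 0 ≤ BX := (l2norm_nonneg _).trans ((row_le X ⟨0, hN⟩).trans hX)
  refine ciSup_le fun i => ?_
  set D := norm2inf (X - Xt) with hD
  have hrow : ∀ j, l2norm (X j - Xt j) ≤ D := fun j => row_le (X - Xt) j
  have hD0 : 0 ≤ D := (l2norm_nonneg _).trans (hrow i)
  let a : Fin H → Fin N → ℝ := fun h j =>
    Matrix.vecMul (LN (X i)) (WQ h) ⬝ᵥ Matrix.vecMul (LN (X j)) (WK h)
  let b : Fin H → Fin N → ℝ := fun h j =>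
    Matrix.vecMul (LN (Xt i)) (WQ h) ⬝ᵥ Matrix.vecMul (LN (Xt j)) (WK h)
  have e : (mha X WQ WK WV - mha Xt WQ WK WV) i = ∑ h, Matrix.vecMul
      (∑ j, ((Real.exp (a h j) / ∑ l, Real.exp (a h l)) • X j -
        (Real.exp (b h j) / ∑ l, Real.exp (b h l)) • Xt j)) (WV h) := by
    ext k
    simp only [mha, Matrix.sub_apply, Matrix.sum_apply, Matrix.of_apply, Finset.sum_apply,
      Matrix.sum_vecMul, Matrix.sub_vecMul, Matrix.smul_vecMul, Pi.sub_apply, Pi.smul_apply,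
      smul_eq_mul, Finset.sum_sub_distrib, a, b]
  rw [e]
  refine (l2norm_sum_le _).trans ?_
  have hh : ∀ h ∈ Finset.univ, l2norm (Matrix.vecMul
      (∑ j, ((Real.exp (a h j) / ∑ l, Real.exp (a h l)) • X j -
        (Real.exp (b h j) / ∑ l, Real.exp (b h l)) • Xt j)) (WV h)) ≤
      (D + 2 * (2 * BX * BQ * BK * D) * BX) * BV := by
    intro h _
    have pa : 0 < ∑ l, Real.exp (a h l) :=
      Finset.sum_pos (fun i _ => Real.exp_pos _) Finset.univ_nonempty
    have h1 := softmax_lip hN (a h) (b h) (2 * BX * BQ * BK * D) (fun j =>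
      logit_lip (X i) (Xt i) (X j) (Xt j) (WQ h) (WK h) BX BQ BK D hBX (hWQ h) (hWK h)
        ((row_le X j).trans hX) ((row_le Xt i).trans hXt) (hrow i) (hrow j))
    have h2 := avg_lip (fun j => Real.exp (a h j) / ∑ l, Real.exp (a h l))
      (fun j => Real.exp (b h j) / ∑ l, Real.exp (b h l)) (fun j => X j) (fun j => Xt j) D BX _
      (fun j => (div_pos (Real.exp_pos _) pa).le)
      (by rw [← Finset.sum_div, div_self pa.ne']) h1 hBX hrow
      (fun j => (row_le Xt j).trans hXt)
    exact (l2norm_vecMul_le _ _).trans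
      (mul_le_mul h2 (hWV h) (Real.sqrt_nonneg _) ((l2norm_nonneg _).trans h2))
  refine (Finset.sum_le_card_nsmul _ _ _ hh).trans (le_of_eq ?_)
  simp only [Finset.card_univ, Fintype.card_fin, nsmul_eq_mul]
  ring
end
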